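/- Let A > 0, C > 0 and p > 2 be real numbers, and for ε > 0 define f_ε : ℝ → ℝ by f_ε(x) = A |x|^{1/6} / ( |x|^{2/3} + ε^{2/3} C ). Set K = A^p ∫_{−∞}^{∞} |y|^{p/6} / ( |y|^{2/3} + C )^p dy (a finite positive real number). Then for every infinitely differentiable function φ : ℝ → ℝ with compact support, ∫_{−∞}^{∞} ε^{(p−2)/2} f_ε(x)^p φ(x) dx → K · φ(0) as ε → 0⁺. In other words, ε^{(p−2)/2} f_ε^p converges to K·δ(x) in the sense of distributions, where δ is the Dirac distribution at the origin. -/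

import Mathlib

open MeasureTheory

lemma aux_integrable (C p : ℝ) (hC : 0 < C) (hp : 2 < p) :
    Continuous (fun y : ℝ => |y| ^ (p / 6) / (|y| ^ ((2 : ℝ) / 3) + C) ^ p) ∧
    Integrable (fun y : ℝ => |y| ^ (p / 6) / (|y| ^ ((2 : ℝ) / 3) + C) ^ p) := by
  have hpos : ∀ y : ℝ, 0 < |y| ^ ((2 : ℝ) / 3) + C := fun y => by positivity
  have hcont : Continuous (fun y : ℝ => |y| ^ (p / 6) / (|y| ^ ((2 : ℝ) / 3) + C) ^ p) := by
    refine Continuous.div ?_ ?_ (fun y => (Real.rpow_pos_of_pos (hpos y) p).ne')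
    · exact continuous_abs.rpow_const (fun _ => Or.inr (by linarith))
    · refine Continuous.rpow_const ?_ (fun y => Or.inl (hpos y).ne')
      exact (continuous_abs.rpow_const (fun _ => Or.inr (by norm_num))).add continuous_const
  refine ⟨hcont, ?_⟩
  refine hcont.locallyIntegrable.integrable_of_isBigO_atTop_of_norm_isNegInvariant
    (g := fun y : ℝ => y ^ (-(p / 2))) ?_ ?_ ?_
  · exact Filter.Eventually.of_forall (fun y => by simp)
  · refine Asymptotics.IsBigO.of_bound 1 ?_
    filter_upwards [Filter.eventually_gt_atTop 0] with y hy
    rw [abs_of_pos hy, one_mul, Real.norm_of_nonneg (by positivity),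
      Real.norm_of_nonneg (by positivity), div_le_iff₀ (by positivity)]
    calc y ^ (p / 6) = y ^ (-(p / 2)) * (y ^ ((2 : ℝ) / 3)) ^ p := by
          rw [← Real.rpow_mul hy.le, ← Real.rpow_add hy]
          congr 1; ring
      _ ≤ _ := by gcongr; linarith
  · rw [integrableAtFilter_rpow_atTop_iff]; linarith

lemma aux_scale (A C p ε y : ℝ) (hA : 0 < A) (hC : 0 < C) (hε : 0 < ε) :
    ε ^ ((p - 2) / 2) * (A * |ε * y| ^ ((1 : ℝ) / 6) /
      (|ε * y| ^ ((2 : ℝ) / 3) + ε ^ ((2 : ℝ) / 3) * C)) ^ p =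
    ε⁻¹ * (A ^ p * (|y| ^ (p / 6) / (|y| ^ ((2 : ℝ) / 3) + C) ^ p)) := by
  have hpos : 0 < |y| ^ ((2 : ℝ) / 3) + C := by positivity
  have h1 : A * |ε * y| ^ ((1 : ℝ) / 6) /
      (|ε * y| ^ ((2 : ℝ) / 3) + ε ^ ((2 : ℝ) / 3) * C) =
      ε ^ (-(1 / 2) : ℝ) * (A * (|y| ^ ((1 : ℝ) / 6) / (|y| ^ ((2 : ℝ) / 3) + C))) := by
    rw [abs_mul, abs_of_pos hε, Real.mul_rpow hε.le (abs_nonneg y),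
      Real.mul_rpow hε.le (abs_nonneg y), ← mul_add]
    have : ε ^ ((1 : ℝ) / 6) = ε ^ (-(1 / 2) : ℝ) * ε ^ ((2 : ℝ) / 3) := by
      rw [← Real.rpow_add hε]; norm_num
    rw [this]
    have : 0 < ε ^ ((2 : ℝ) / 3) := by positivity
    field_simp
  rw [h1, Real.mul_rpow (by positivity) (by positivity), Real.mul_rpow hA.le (by positivity),
    Real.div_rpow (by positivity) hpos.le, ← Real.rpow_mul hε.le,
    ← Real.rpow_mul (abs_nonneg y), ← mul_assoc, ← Real.rpow_add hε, ← Real.rpow_neg_one ε]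
  congr 2
  · ring
  · rw [show 1 / 6 * p = p / 6 by ring]



/-- δ-blow-up in the sense of distributions: with
`f_ε(x) = A|x|^{1/6}/(|x|^{2/3} + ε^{2/3}C)` and
`K = A^p ∫ |y|^{p/6}/(|y|^{2/3} + C)^p dy` (a finite positive real number), for every smooth
compactly supported test function `φ`,
`∫ ε^{(p-2)/2} f_ε(x)^p φ(x) dx → K φ(0)` as `ε → 0⁺`; that is,
`ε^{(p-2)/2} f_ε^p → K δ(x)` in the sense of generalized functions. -/
theorem delta_blowup_distributional (A C p : ℝ) (hA : 0 < A) (hC : 0 < C) (hp : 2 < p)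
    (f : ℝ → ℝ → ℝ)
    (hf : ∀ ε x : ℝ, 0 < ε →
      f ε x = A * |x| ^ ((1 : ℝ) / 6) / (|x| ^ ((2 : ℝ) / 3) + ε ^ ((2 : ℝ) / 3) * C))
    (K : ℝ)
    (hK : K = A ^ p * ∫ y : ℝ, |y| ^ (p / 6) / (|y| ^ ((2 : ℝ) / 3) + C) ^ p) :
    Integrable (fun y : ℝ => |y| ^ (p / 6) / (|y| ^ ((2 : ℝ) / 3) + C) ^ p) ∧
    0 < K ∧
    ∀ φ : ℝ → ℝ, ContDiff ℝ (⊤ : ℕ∞) φ → HasCompactSupport φ →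
      Filter.Tendsto (fun ε => ∫ x : ℝ, ε ^ ((p - 2) / 2) * f ε x ^ p * φ x)
        (nhdsWithin 0 (Set.Ioi 0)) (nhds (K * φ 0)) := by
  obtain ⟨hcont, hint⟩ := aux_integrable C p hC hp
  have hpos : ∀ y : ℝ, 0 < |y| ^ ((2 : ℝ) / 3) + C := fun y => by positivity
  have hAp : 0 < A ^ p := Real.rpow_pos_of_pos hA p
  have hnn : ∀ y : ℝ, 0 ≤ |y| ^ (p / 6) / (|y| ^ ((2 : ℝ) / 3) + C) ^ p := fun y => by
    have := hpos y
    positivity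
  refine ⟨hint, ?_, ?_⟩
  · rw [hK]
    refine mul_pos hAp (integral_pos_of_integrable_nonneg_nonzero
      (x := 1) hcont hint hnn ?_)
    have := hpos 1
    simp only [abs_one, Real.one_rpow] at this ⊢
    positivity
  · intro φ hφ hsupp
    have hφc : Continuous φ := hφ.continuous
    obtain ⟨M, hM⟩ := hsupp.exists_bound_of_continuous hφc
    have key : ∀ ε : ℝ, 0 < ε → ∫ x : ℝ, ε ^ ((p - 2) / 2) * f ε x ^ p * φ x =
        ∫ y : ℝ, A ^ p * (|y| ^ (p / 6) / (|y| ^ ((2 : ℝ) / 3) + C) ^ p) * φ (ε * y) := by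
      intro ε hε
      have h := Measure.integral_comp_mul_left
        (fun x : ℝ => ε ^ ((p - 2) / 2) * f ε x ^ p * φ x) ε
      rw [abs_of_pos (inv_pos.mpr hε), smul_eq_mul] at h
      have h2 : ∫ x : ℝ, ε ^ ((p - 2) / 2) * f ε x ^ p * φ x = 
          ε * ∫ x : ℝ, ε ^ ((p - 2) / 2) * f ε (ε * x) ^ p * φ (ε * x) := by
        rw [h, ← mul_assoc, mul_inv_cancel₀ hε.ne', one_mul]
      rw [h2, ← integral_const_mul]
      congr 1
      funext y
      rw [hf ε _ hε, aux_scale A C p ε y hA hC hε]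
      field_simp
    have hlim : K * φ 0 =
        ∫ y : ℝ, A ^ p * (|y| ^ (p / 6) / (|y| ^ ((2 : ℝ) / 3) + C) ^ p) * φ 0 := by
      rw [integral_mul_const, integral_const_mul, hK]
    rw [hlim]
    refine Filter.Tendsto.congr' (f₁ := fun ε : ℝ =>
      ∫ y : ℝ, A ^ p * (|y| ^ (p / 6) / (|y| ^ ((2 : ℝ) / 3) + C) ^ p) * φ (ε * y)) ?_ ?_
    · filter_upwards [self_mem_nhdsWithin] with ε hε
      exact (key ε hε).symm
    · refine tendsto_integral_filter_of_dominated_convergence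
        (fun y => A ^ p * (|y| ^ (p / 6) / (|y| ^ ((2 : ℝ) / 3) + C) ^ p) * M) ?_ ?_ ?_ ?_
      · refine Filter.Eventually.of_forall (fun ε => Continuous.aestronglyMeasurable ?_)
        exact (continuous_const.mul hcont).mul (hφc.comp (continuous_const.mul continuous_id))
      · refine Filter.Eventually.of_forall (fun ε => Filter.Eventually.of_forall (fun y => ?_))
        have h0 := mul_nonneg hAp.le (hnn y)
        rw [norm_mul, Real.norm_of_nonneg h0]
        exact mul_le_mul_of_nonneg_left (hM _) h0
      · exact (hint.const_mul _).mul_const _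
      · refine Filter.Eventually.of_forall (fun y => ?_)
        have hc : Continuous (fun ε : ℝ => φ (ε * y)) :=
          hφc.comp (continuous_id.mul continuous_const)
        have := (hc.tendsto 0).mono_left (nhdsWithin_le_nhds (s := Set.Ioi (0 : ℝ)))
        rw [zero_mul] at this
        exact this.const_mul _
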